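/- arXiv:1611.03189 — 3 statements merged into one kernel-verified Lean document; each statement's English description precedes it below -/
import Mathlib

section
/- Let K_ff, E_ff be symmetric n×n real matrices, K_fc, E_fc be n×m real matrices, K_cc a symmetric invertible m×m real matrix, and set K_cf := K_fcᵀ and E_cf := E_fcᵀ. Define A := (K_ff + E_ff) − (K_fc + E_fc)K_cc⁻¹(K_cf + E_cf), A_H := K_ff − K_fc K_cc⁻¹ K_cf, and ‖E‖_F := (‖E_ff‖_F² + 2‖E_fc‖_F²)^{1/2}. If ‖E‖_F ≤ (2N)^{1/2}·ε for some integer N ≥ 1 and ε ≥ 0, then ‖A − A_H‖_F ≤ (2N)^{1/2}·√(1 + 2‖K_cc⁻¹K_cf‖_F²)·ε + 2N·‖K_cc⁻¹‖_F·ε². -/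
open Matrix

/-- Frobenius norm of a real matrix. -/
noncomputable def frobNorm {m n : ℕ} (M : Matrix (Fin m) (Fin n) ℝ) : ℝ :=
  Real.sqrt (∑ i, ∑ j, M i j ^ 2)

/-!
Expanding the products, the two Schur complements differ by
`E_ff - K_fc K_cc⁻¹ E_cf - E_fc K_cc⁻¹ K_cf - E_fc K_cc⁻¹ E_cf`. The first three terms are linear in
the perturbation, and Cauchy–Schwarz in `ℝ³` bounds the sum of their norms by
`‖E‖_F √(1 + ‖K_fc K_cc⁻¹‖_F² + ‖K_cc⁻¹ K_cf‖_F²)`. The last one is at most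
`‖K_cc⁻¹‖_F ‖E_fc‖_F²`, and `2 ‖E_fc‖_F² ≤ ‖E‖_F²`.

The matrices `K`, `E`, `B`, `F`, `S`, `C`, `G` below play the roles of `K_ff`, `E_ff`, `K_fc`,
`E_fc`, `K_cc⁻¹`, `K_cf`, `E_cf`.
-/

theorem add_mul_add_mul_le_sqrt_mul_sqrt (e f g x y : ℝ) :
    e + f * x + g * y ≤ √(e ^ 2 + f ^ 2 + g ^ 2) * √(1 + x ^ 2 + y ^ 2) := by
  simpa [Fin.sum_univ_three] using
    Real.sum_mul_le_sqrt_mul_sqrt Finset.univ ![e, f, g] ![1, x, y]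

theorem schur_perturbation_sub_eq {l m p q R : Type*} [Fintype p] [Fintype q]
    [NonUnitalRing R] (K E : Matrix l m R) (B F : Matrix l p R) (S : Matrix p q R)
    (C G : Matrix q m R) :
    (K + E - (B + F) * S * (C + G)) - (K - B * S * C) =
      E - F * (S * C) - B * S * G - F * S * G := by
  simp only [Matrix.add_mul, Matrix.mul_add, Matrix.mul_assoc]
  abel

section FrobeniusNorm

open scoped Matrix.Norms.Frobenius

theorem frobNorm_eq_frobenius_norm {m n : ℕ} (M : Matrix (Fin m) (Fin n) ℝ) :
    frobNorm M = ‖M‖ := by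
  simp [frobNorm, frobenius_norm_def, Real.sqrt_eq_rpow]

variable {𝕜 l m p q : Type*} [RCLike 𝕜] [Fintype l] [Fintype m] [Fintype p] [Fintype q]

theorem frobenius_norm_schur_perturbation_sub_le (K E : Matrix l m 𝕜) (B F : Matrix l p 𝕜)
    (S : Matrix p q 𝕜) (C G : Matrix q m 𝕜) :
    ‖(K + E - (B + F) * S * (C + G)) - (K - B * S * C)‖ ≤
      √(‖E‖ ^ 2 + ‖F‖ ^ 2 + ‖G‖ ^ 2) * √(1 + ‖S * C‖ ^ 2 + ‖B * S‖ ^ 2)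
        + ‖S‖ * (‖F‖ * ‖G‖) := by
  have norm_second_order : ‖F * S * G‖ ≤ ‖S‖ * (‖F‖ * ‖G‖) :=
    calc ‖F * S * G‖ ≤ ‖F * S‖ * ‖G‖ := frobenius_norm_mul _ _
      _ ≤ ‖F‖ * ‖S‖ * ‖G‖ := by gcongr; exact frobenius_norm_mul _ _
      _ = ‖S‖ * (‖F‖ * ‖G‖) := by ring
  calc ‖(K + E - (B + F) * S * (C + G)) - (K - B * S * C)‖
      = ‖E - F * (S * C) - B * S * G - F * S * G‖ := by rw [schur_perturbation_sub_eq]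
    _ ≤ ‖E‖ + ‖F * (S * C)‖ + ‖B * S * G‖ + ‖F * S * G‖ :=
      norm_sub_le_of_le (norm_sub_le_of_le (norm_sub_le _ _) le_rfl) le_rfl
    _ ≤ ‖E‖ + ‖F‖ * ‖S * C‖ + ‖B * S‖ * ‖G‖ + ‖S‖ * (‖F‖ * ‖G‖) := by
      gcongr <;> exact frobenius_norm_mul _ _
    _ = ‖E‖ + ‖F‖ * ‖S * C‖ + ‖G‖ * ‖B * S‖ + ‖S‖ * (‖F‖ * ‖G‖) := by ring
    _ ≤ _ := by gcongr; exact add_mul_add_mul_le_sqrt_mul_sqrt _ _ _ _ _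

theorem hierarchical_factorization_error_estimate_N_compressions_general
    (K E : Matrix l l 𝕜) (B F : Matrix l p 𝕜) {S : Matrix p p 𝕜} (hS : S.IsHermitian)
    {δ : ℝ} (hE : √(‖E‖ ^ 2 + 2 * ‖F‖ ^ 2) ≤ δ) :
    ‖(K + E - (B + F) * S * (Bᴴ + Fᴴ)) - (K - B * S * Bᴴ)‖ ≤
      δ * √(1 + 2 * ‖S * Bᴴ‖ ^ 2) + ‖S‖ * (δ ^ 2 / 2) := by
  have norm_mul_eq : ‖B * S‖ = ‖S * Bᴴ‖ := by
    rw [← frobenius_norm_conjTranspose (B * S), conjTranspose_mul, hS.eq]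
  have norm_mul_self_le : ‖F‖ * ‖F‖ ≤ δ ^ 2 / 2 := by
    have := (Real.sqrt_le_iff.mp hE).2
    linarith [sq_nonneg ‖E‖, sq ‖F‖]
  calc _ ≤ _ := frobenius_norm_schur_perturbation_sub_le K E B F S Bᴴ Fᴴ
    _ = √(‖E‖ ^ 2 + 2 * ‖F‖ ^ 2) * √(1 + 2 * ‖S * Bᴴ‖ ^ 2) + ‖S‖ * (‖F‖ * ‖F‖) := by
      simp only [frobenius_norm_conjTranspose, norm_mul_eq, add_assoc, two_mul]
    _ ≤ δ * √(1 + 2 * ‖S * Bᴴ‖ ^ 2) + ‖S‖ * (δ ^ 2 / 2) := by gcongr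

end FrobeniusNorm

/-- Error estimate for the hierarchical factorization with `N` local
compressions of accuracy `ε`.  With `A`, `A_H` the perturbed/unperturbed Schur
complements as before and `‖E‖_F := (‖E_ff‖_F² + 2‖E_fc‖_F²)^{1/2} ≤ (2N)^{1/2}·ε`,
one has `‖A − A_H‖_F ≤ (2N)^{1/2}·√(1 + 2‖K_cc⁻¹K_cf‖_F²)·ε + 2N·‖K_cc⁻¹‖_F·ε²`. -/
theorem hierarchical_factorization_error_estimate_N_compressions {n m : ℕ}
    (Kff Eff : Matrix (Fin n) (Fin n) ℝ)
    (Kfc Efc : Matrix (Fin n) (Fin m) ℝ)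
    (Kcc : Matrix (Fin m) (Fin m) ℝ)
    (hKff : Kff.IsSymm) (hEff : Eff.IsSymm) (hKcc : Kcc.IsSymm)
    (hinv : IsUnit Kcc.det)
    (A AH : Matrix (Fin n) (Fin n) ℝ)
    (hA : A = (Kff + Eff) - (Kfc + Efc) * Kcc⁻¹ * (Kfcᵀ + Efcᵀ))
    (hAH : AH = Kff - Kfc * Kcc⁻¹ * Kfcᵀ)
    (N : ℕ) (hN : 1 ≤ N) (ε : ℝ) (hε : 0 ≤ ε)
    (hEF : Real.sqrt (frobNorm Eff ^ 2 + 2 * frobNorm Efc ^ 2)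
             ≤ Real.sqrt (2 * N) * ε) :
    frobNorm (A - AH) ≤
      Real.sqrt (2 * N) * Real.sqrt (1 + 2 * frobNorm (Kcc⁻¹ * Kfcᵀ) ^ 2) * ε
        + 2 * N * frobNorm Kcc⁻¹ * ε ^ 2 := by
  subst hA hAH
  have sharp_bound := hierarchical_factorization_error_estimate_N_compressions_general
    Kff Eff Kfc Efc (isHermitian_iff_isSymm.mpr hKcc).inv
    (by simpa only [frobNorm_eq_frobenius_norm] using hEF)
  simp only [← frobNorm_eq_frobenius_norm, conjTranspose_eq_transpose_of_trivial, mul_pow,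
    Real.sq_sqrt (by positivity : (0 : ℝ) ≤ 2 * N)] at sharp_bound
  have slack_nonneg : 0 ≤ N * frobNorm Kcc⁻¹ * ε ^ 2 := by unfold frobNorm; positivity
  linarith
end

section
/- Let A be an n×n real symmetric positive definite matrix with orthonormal eigenbasis e₁,…,e_n and corresponding eigenvalues λ₁,…,λ_n, largest eigenvalue λ_max, smallest eigenvalue λ_min and κ(A) = λ_max/λ_min. Fix η > 0 and set S₁ := span{eᵢ : λᵢ < η} and S₂ := span{eᵢ : λᵢ ≥ η}. Let A_H be an n×n real symmetric matrix with ‖(A − A_H)v‖ ≤ ε₁·λ_max·‖v‖ for all v ∈ S₁ and ‖(A − A_H)v‖ ≤ ε₂·λ_max·‖v‖ for all v ∈ S₂, where ε₁, ε₂ ≥ 0. Assume δ := (2/√3)·ε₁·κ(A) + ε₂·λ_max/η < 1. Then for every v ∈ ℝⁿ, (1 − δ)·vᵀAv ≤ vᵀA_H v ≤ (1 + δ)·vᵀAv; consequently every eigenvalue ρ of A_H⁻¹A satisfies 1/(1+δ) ≤ ρ ≤ 1/(1−δ) and κ(A_H⁻¹A) ≤ (1+δ)/(1−δ). -/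
open Matrix

/-- Euclidean norm on ℝⁿ. -/
noncomputable def enorm {n : ℕ} (v : Fin n → ℝ) : ℝ := Real.sqrt (∑ i, v i ^ 2)

/-!
Write `D := A - A_H`, `α := ε₁ λ_max` and `β := ε₂ λ_max`. For `v = x + y` with `x ∈ S₁`, `y ∈ S₂`,
symmetry of `D` gives `⟪v, D v⟫ = ⟪x, D x⟫ + 2 ⟪x, D y⟫ + ⟪y, D y⟫`, and since
`⟪x, D y⟫ = ⟪y, D x⟫` can be bounded from either side, it is at most `min α β ‖x‖ ‖y‖`. By AM-GM
the cross term is absorbed by the mixed terms of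
`(α / λ_min + β / η) (λ_min ‖x‖² + η ‖y‖²)`, and the second factor is at most `⟪v, A v⟫` because
`A` is diagonal in the eigenbasis. Hence `vᵀA_H v` is within a factor `1 ± δ` of `vᵀA v`, even with
`1` in place of `2 / √3` in `δ`. An eigenvector of `A_H⁻¹ A` with eigenvalue `ρ` satisfies
`A v = ρ A_H v`, so that `ρ` is a ratio of these two quadratic forms.
-/

open scoped RealInnerProductSpace

section InnerProductSpace

variable {E ι : Type*} [NormedAddCommGroup E] [InnerProductSpace ℝ E] {α β l η : ℝ}

theorem two_mul_min_mul_le (hα : 0 ≤ α) (hβ : 0 ≤ β) (hl : 0 < l) (hη : 0 < η) (s t : ℝ) :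
    2 * (min α β * (s * t)) ≤ α / l * (η * t ^ 2) + β / η * (l * s ^ 2) := by
  have amgm : 2 * (s * t) ≤ η / l * t ^ 2 + l / η * s ^ 2 := by
    have gap : η / l * t ^ 2 + l / η * s ^ 2 - 2 * (s * t) = (η * t - l * s) ^ 2 / (l * η) := by
      field_simp
      ring
    exact sub_nonneg.mp (gap ▸ by positivity)
  calc 2 * (min α β * (s * t)) = min α β * (2 * (s * t)) := by ring
    _ ≤ min α β * (η / l * t ^ 2 + l / η * s ^ 2) :=
        mul_le_mul_of_nonneg_left amgm (le_min hα hβ)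
    _ = min α β * (η / l * t ^ 2) + min α β * (l / η * s ^ 2) := mul_add _ _ _
    _ ≤ α * (η / l * t ^ 2) + β * (l / η * s ^ 2) := by
        gcongr
        exacts [min_le_left _ _, min_le_right _ _]
    _ = α / l * (η * t ^ 2) + β / η * (l * s ^ 2) := by ring

theorem abs_inner_map_le {D : E →ₗ[ℝ] E} {y : E} (hy : ‖D y‖ ≤ β * ‖y‖) (x : E) :
    |⟪x, D y⟫| ≤ β * (‖x‖ * ‖y‖) :=
  calc |⟪x, D y⟫| ≤ ‖x‖ * ‖D y‖ := abs_real_inner_le_norm _ _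
    _ ≤ ‖x‖ * (β * ‖y‖) := by gcongr
    _ = β * (‖x‖ * ‖y‖) := by ring

theorem abs_inner_add_map_add_le {D : E →ₗ[ℝ] E} (hD : D.IsSymmetric)
    (hα : 0 ≤ α) (hβ : 0 ≤ β) (hl : 0 < l) (hη : 0 < η) {x y : E}
    (hx : ‖D x‖ ≤ α * ‖x‖) (hy : ‖D y‖ ≤ β * ‖y‖) :
    |⟪x + y, D (x + y)⟫| ≤ (α / l + β / η) * (l * ‖x‖ ^ 2 + η * ‖y‖ ^ 2) := by
  have cross_comm : ⟪y, D x⟫ = ⟪x, D y⟫ := by rw [← hD, real_inner_comm]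
  have cross_le : |⟪x, D y⟫| ≤ min α β * (‖x‖ * ‖y‖) := by
    rw [min_mul_of_nonneg _ _ (by positivity)]
    refine le_min ?_ (abs_inner_map_le hy x)
    rw [← cross_comm, mul_comm ‖x‖]
    exact abs_inner_map_le hx y
  have expand : ⟪x + y, D (x + y)⟫ = ⟪x, D x⟫ + 2 * ⟪x, D y⟫ + ⟪y, D y⟫ := by
    rw [map_add, inner_add_left, inner_add_right, inner_add_right, cross_comm]
    ring
  calc |⟪x + y, D (x + y)⟫| ≤ |⟪x, D x⟫| + 2 * |⟪x, D y⟫| + |⟪y, D y⟫| := by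
        simpa only [expand, abs_mul, abs_two] using
          abs_add_three ⟪x, D x⟫ (2 * ⟪x, D y⟫) ⟪y, D y⟫
    _ ≤ α * (‖x‖ * ‖x‖) + 2 * (min α β * (‖x‖ * ‖y‖)) + β * (‖y‖ * ‖y‖) := by
        gcongr
        exacts [abs_inner_map_le hx x, abs_inner_map_le hy y]
    _ ≤ α * (‖x‖ * ‖x‖) + (α / l * (η * ‖y‖ ^ 2) + β / η * (l * ‖x‖ ^ 2)) + β * (‖y‖ * ‖y‖) := by
        gcongr
        exact two_mul_min_mul_le hα hβ hl hη _ _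
    _ = (α / l + β / η) * (l * ‖x‖ ^ 2 + η * ‖y‖ ^ 2) := by
        field_simp
        ring

theorem norm_sq_sum_smul_of_orthonormal {b : ι → E} (hb : Orthonormal ℝ b) (s : Finset ι)
    (c : ι → ℝ) : ‖∑ i ∈ s, c i • b i‖ ^ 2 = ∑ i ∈ s, c i ^ 2 := by
  rw [← real_inner_self_eq_norm_sq, hb.inner_sum]
  exact Finset.sum_congr rfl fun i _ ↦ (sq (c i)).symm

variable [Fintype ι] {T : E →ₗ[ℝ] E} {lam : ι → ℝ}

theorem inner_map_self_eq_sum_of_eigenbasis (b : OrthonormalBasis ι ℝ E)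
    (hT : ∀ i, T (b i) = lam i • b i) (v : E) :
    ⟪v, T v⟫ = ∑ i, lam i * ⟪b i, v⟫ ^ 2 := by
  have hTv : T v = ∑ i, (lam i * ⟪b i, v⟫) • b i := by
    conv_lhs => rw [← b.sum_repr' v]
    simp only [map_sum, map_smul, hT, smul_smul, mul_comm]
  rw [hTv, inner_sum]
  refine Finset.sum_congr rfl fun i _ ↦ ?_
  rw [real_inner_smul_right, real_inner_comm v]
  ring

theorem exists_add_eq_and_le_inner_map_self (b : OrthonormalBasis ι ℝ E)
    (hT : ∀ i, T (b i) = lam i • b i) (hl : ∀ i, l ≤ lam i) (η : ℝ) (v : E) :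
    ∃ x ∈ Submodule.span ℝ (b '' {i | lam i < η}),
      ∃ y ∈ Submodule.span ℝ (b '' {i | η ≤ lam i}),
        x + y = v ∧ l * ‖x‖ ^ 2 + η * ‖y‖ ^ 2 ≤ ⟪v, T v⟫ := by
  let low : Finset ι := {i | lam i < η}
  let high : Finset ι := {i | ¬lam i < η}
  refine ⟨∑ i ∈ low, ⟪b i, v⟫ • b i, ?_, ∑ i ∈ high, ⟪b i, v⟫ • b i, ?_, ?_, ?_⟩
  · exact Submodule.sum_smul_mem _ _ fun i hi ↦
      Submodule.subset_span ⟨i, (Finset.mem_filter.mp hi).2, rfl⟩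
  · exact Submodule.sum_smul_mem _ _ fun i hi ↦
      Submodule.subset_span ⟨i, not_lt.mp (Finset.mem_filter.mp hi).2, rfl⟩
  · rw [Finset.sum_filter_add_sum_filter_not, b.sum_repr']
  · rw [norm_sq_sum_smul_of_orthonormal b.orthonormal,
      norm_sq_sum_smul_of_orthonormal b.orthonormal,
      inner_map_self_eq_sum_of_eigenbasis b hT, Finset.mul_sum, Finset.mul_sum,
      ← Finset.sum_filter_add_sum_filter_not Finset.univ fun i ↦ lam i < η]
    gcongr with i _ i hi
    · exact hl i
    · exact not_lt.mp (Finset.mem_filter.mp hi).2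

theorem abs_inner_map_self_le_of_eigenbasis {D : E →ₗ[ℝ] E} (hD : D.IsSymmetric)
    (b : OrthonormalBasis ι ℝ E) (hT : ∀ i, T (b i) = lam i • b i)
    (hα : 0 ≤ α) (hβ : 0 ≤ β) (hl : 0 < l) (hη : 0 < η) (hlam : ∀ i, l ≤ lam i)
    (hlow : ∀ x ∈ Submodule.span ℝ (b '' {i | lam i < η}), ‖D x‖ ≤ α * ‖x‖)
    (hhigh : ∀ y ∈ Submodule.span ℝ (b '' {i | η ≤ lam i}), ‖D y‖ ≤ β * ‖y‖) (v : E) :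
    |⟪v, D v⟫| ≤ (α / l + β / η) * ⟪v, T v⟫ := by
  obtain ⟨x, hx, y, hy, rfl, hle⟩ := exists_add_eq_and_le_inner_map_self b hT hlam η v
  exact (abs_inner_add_map_add_le hD hα hβ hl hη (hlow x hx) (hhigh y hy)).trans
    (mul_le_mul_of_nonneg_left hle (by positivity))

end InnerProductSpace

section SpectralApprox

variable {ι : Type*} [Fintype ι] {A B : Matrix ι ι ℝ} {δ : ℝ}

/-- `B` is spectrally equivalent to `A` with relative error `δ`: the quadratic forms satisfy
`(1 - δ) A ≤ B ≤ (1 + δ) A`. This is the property of a preconditioner `B` that controls the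
spectrum of `B⁻¹ A`. -/
def IsSpectralApprox (δ : ℝ) (A B : Matrix ι ι ℝ) : Prop :=
  ∀ v : ι → ℝ, (1 - δ) * (v ⬝ᵥ A *ᵥ v) ≤ v ⬝ᵥ B *ᵥ v ∧ v ⬝ᵥ B *ᵥ v ≤ (1 + δ) * (v ⬝ᵥ A *ᵥ v)

theorem isSpectralApprox_of_abs_dotProduct_sub_mulVec_le
    (h : ∀ v : ι → ℝ, |v ⬝ᵥ (A - B) *ᵥ v| ≤ δ * (v ⬝ᵥ A *ᵥ v)) : IsSpectralApprox δ A B := by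
  intro v
  have hv := abs_le.mp (h v)
  rw [sub_mulVec, dotProduct_sub] at hv
  constructor <;> linarith

theorem eigenvalue_pos_of_posDef (hA : A.PosDef) {v : ι → ℝ} (hv : v ≠ 0) {μ : ℝ}
    (h : A *ᵥ v = μ • v) : 0 < μ := by
  have hpos : 0 < v ⬝ᵥ A *ᵥ v := hA.dotProduct_mulVec_pos hv
  rw [h, dotProduct_smul, smul_eq_mul] at hpos
  exact pos_of_mul_pos_left hpos (by simpa using dotProduct_star_self_nonneg v)

namespace IsSpectralApprox

theorem dotProduct_mulVec_pos (h : IsSpectralApprox δ A B) (hA : A.PosDef) (hδ : δ < 1)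
    {v : ι → ℝ} (hv : v ≠ 0) : 0 < v ⬝ᵥ B *ᵥ v :=
  (mul_pos (sub_pos.mpr hδ) (hA.dotProduct_mulVec_pos hv)).trans_le (h v).1

theorem nonneg_of_ne_zero (h : IsSpectralApprox δ A B) (hA : A.PosDef) {v : ι → ℝ} (hv : v ≠ 0) :
    0 ≤ δ := by
  have hle := le_of_mul_le_mul_right ((h v).1.trans (h v).2) (hA.dotProduct_mulVec_pos hv)
  linarith

variable [DecidableEq ι]

theorem isUnit_det (h : IsSpectralApprox δ A B) (hA : A.PosDef) (hδ : δ < 1) : IsUnit B.det := by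
  rw [isUnit_iff_ne_zero]
  intro hdet
  obtain ⟨v, hv, hBv⟩ := exists_mulVec_eq_zero_iff.mpr hdet
  simpa [hBv] using h.dotProduct_mulVec_pos hA hδ hv

theorem eigenvalue_bounds (h : IsSpectralApprox δ A B) (hA : A.PosDef) (hδ : δ < 1) {ρ : ℝ}
    {v : ι → ℝ} (hv : v ≠ 0) (hρ : (B⁻¹ * A) *ᵥ v = ρ • v) :
    1 / (1 + δ) ≤ ρ ∧ ρ ≤ 1 / (1 - δ) := by
  have hAv : A *ᵥ v = ρ • B *ᵥ v := by
    rw [← mulVec_smul, ← hρ, mulVec_mulVec, mul_nonsing_inv_cancel_left _ _ (h.isUnit_det hA hδ)]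
  have rayleigh : ρ * (v ⬝ᵥ B *ᵥ v) = v ⬝ᵥ A *ᵥ v := by rw [hAv, dotProduct_smul, smul_eq_mul]
  have hB := h.dotProduct_mulVec_pos hA hδ hv
  have hδ₀ := h.nonneg_of_ne_zero hA hv
  obtain ⟨lower, upper⟩ := h v
  rw [← rayleigh, ← mul_assoc] at lower upper
  constructor
  · rw [div_le_iff₀' (by linarith)]
    exact le_of_mul_le_mul_right (by rwa [one_mul]) hB
  · rw [le_div_iff₀' (by linarith)]
    exact le_of_mul_le_mul_right (by rwa [one_mul]) hB

theorem eigenvalue_div_le (h : IsSpectralApprox δ A B) (hA : A.PosDef) (hδ : δ < 1) {ρ₁ ρ₂ : ℝ}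
    {v₁ v₂ : ι → ℝ} (hv₁ : v₁ ≠ 0) (hv₂ : v₂ ≠ 0) (hρ₁ : (B⁻¹ * A) *ᵥ v₁ = ρ₁ • v₁)
    (hρ₂ : (B⁻¹ * A) *ᵥ v₂ = ρ₂ • v₂) : ρ₁ / ρ₂ ≤ (1 + δ) / (1 - δ) := by
  have hδ₀ := h.nonneg_of_ne_zero hA hv₁
  have hδ₁ : 0 < 1 - δ := sub_pos.mpr hδ
  calc ρ₁ / ρ₂ ≤ (1 / (1 - δ)) / (1 / (1 + δ)) :=
        div_le_div₀ (by positivity) (h.eigenvalue_bounds hA hδ hv₁ hρ₁).2 (by positivity)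
          (h.eigenvalue_bounds hA hδ hv₂ hρ₂).1
    _ = (1 + δ) / (1 - δ) := by field_simp

end IsSpectralApprox

end SpectralApprox

section EuclideanSpace

open WithLp (toLp ofLp)

variable {ι : Type*}

theorem enorm_eq_norm_toLp {n : ℕ} (v : Fin n → ℝ) : _root_.enorm v = ‖toLp 2 v‖ := by
  simp [_root_.enorm, EuclideanSpace.norm_eq]

theorem ofLp_mem_span_of_mem_span_image {κ : Type*} {b : κ → EuclideanSpace ℝ ι} {e : κ → ι → ℝ}
    (hb : ∀ i, b i = toLp 2 (e i)) {p : κ → Prop} {x : EuclideanSpace ℝ ι}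
    (hx : x ∈ Submodule.span ℝ (b '' {i | p i})) :
    ofLp x ∈ Submodule.span ℝ {v | ∃ i, p i ∧ v = e i} := by
  have generators : b '' {i | p i} ⊆ (Submodule.span ℝ {v | ∃ i, p i ∧ v = e i}).comap
      (WithLp.linearEquiv 2 ℝ (ι → ℝ)).toLinearMap := by
    rintro _ ⟨i, hi, rfl⟩
    exact Submodule.subset_span ⟨i, hi, congrArg ofLp (hb i)⟩
  exact Submodule.span_le.mpr generators hx

variable [Fintype ι] [DecidableEq ι]

theorem inner_toEuclideanLin_self (M : Matrix ι ι ℝ) (v : ι → ℝ) :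
    ⟪toLp 2 v, M.toEuclideanLin (toLp 2 v)⟫ = v ⬝ᵥ M *ᵥ v := by
  simp [EuclideanSpace.inner_toLp_toLp, dotProduct_comm]

theorem exists_orthonormalBasis_eq_toLp {e : ι → ι → ℝ}
    (he : ∀ i j, e i ⬝ᵥ e j = if i = j then (1 : ℝ) else 0) :
    ∃ b : OrthonormalBasis ι ℝ (EuclideanSpace ℝ ι), ∀ i, b i = toLp 2 (e i) := by
  have orthonormal : Orthonormal ℝ fun i ↦ toLp 2 (e i) := by
    rw [orthonormal_iff_ite]
    intro i j
    simpa [EuclideanSpace.inner_toLp_toLp, dotProduct_comm] using he i j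
  have span_eq_top :=
    orthonormal.linearIndependent.span_eq_top_of_card_eq_finrank' finrank_euclideanSpace.symm
  exact ⟨.mk orthonormal span_eq_top.ge, fun i ↦ congrFun (OrthonormalBasis.coe_mk _ _) i⟩

theorem isSpectralApprox_of_eigenbasis {A B : Matrix ι ι ℝ} (hA : A.PosDef) (hB : B.IsSymm)
    {e : ι → ι → ℝ} {lam : ι → ℝ} (heig : ∀ i, A *ᵥ e i = lam i • e i)
    (he : ∀ i j, e i ⬝ᵥ e j = if i = j then (1 : ℝ) else 0)
    {α β l η δ : ℝ} (hα : 0 ≤ α) (hβ : 0 ≤ β) (hl : 0 < l) (hη : 0 < η) (hlam : ∀ i, l ≤ lam i)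
    (hlow : ∀ v ∈ Submodule.span ℝ {v | ∃ i, lam i < η ∧ v = e i},
      ‖toLp 2 ((A - B) *ᵥ v)‖ ≤ α * ‖toLp 2 v‖)
    (hhigh : ∀ v ∈ Submodule.span ℝ {v | ∃ i, η ≤ lam i ∧ v = e i},
      ‖toLp 2 ((A - B) *ᵥ v)‖ ≤ β * ‖toLp 2 v‖)
    (hδ : α / l + β / η ≤ δ) : IsSpectralApprox δ A B := by
  obtain ⟨b, hb⟩ := exists_orthonormalBasis_eq_toLp he
  have symm : (A - B).toEuclideanLin.IsSymmetric :=
    isSymmetric_toEuclideanLin_iff.mpr <|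
      hA.isHermitian.sub ((conjTranspose_eq_transpose_of_trivial B).trans hB)
  have eigen (i : ι) : A.toEuclideanLin (b i) = lam i • b i := by
    simp [hb, heig]
  refine isSpectralApprox_of_abs_dotProduct_sub_mulVec_le fun v ↦ ?_
  have hv := abs_inner_map_self_le_of_eigenbasis symm b eigen hα hβ hl hη hlam
    (fun x hx ↦ hlow _ (ofLp_mem_span_of_mem_span_image hb hx))
    (fun y hy ↦ hhigh _ (ofLp_mem_span_of_mem_span_image hb hy)) (toLp 2 v)
  rw [inner_toEuclideanLin_self, inner_toEuclideanLin_self] at hv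
  exact hv.trans (mul_le_mul_of_nonneg_right hδ (hA.posSemidef.dotProduct_mulVec_nonneg v))

end EuclideanSpace

theorem one_le_two_div_sqrt_three : 1 ≤ 2 / √3 := by
  rw [one_le_div (by positivity), Real.sqrt_le_left (by norm_num)]
  norm_num

theorem preconditioner_two_piece_splitting_general {ι : Type*} [Fintype ι] [DecidableEq ι]
    {A AH : Matrix ι ι ℝ} (hA : A.PosDef) (hAH : AH.IsSymm)
    {e : ι → ι → ℝ} {lam : ι → ℝ} (heig : ∀ i, A *ᵥ e i = lam i • e i)
    (hortho : ∀ i j, e i ⬝ᵥ e j = if i = j then (1 : ℝ) else 0)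
    {lammax lammin : ℝ}
    (hmax : (∃ i, lam i = lammax) ∧ ∀ i, lam i ≤ lammax)
    (hmin : (∃ i, lam i = lammin) ∧ ∀ i, lammin ≤ lam i)
    {η ε₁ ε₂ : ℝ} (hη : 0 < η) (hε₁ : 0 ≤ ε₁) (hε₂ : 0 ≤ ε₂)
    (h₁ : ∀ v ∈ Submodule.span ℝ {v | ∃ i, lam i < η ∧ v = e i},
      ‖WithLp.toLp 2 ((A - AH) *ᵥ v)‖ ≤ ε₁ * lammax * ‖WithLp.toLp 2 v‖)
    (h₂ : ∀ v ∈ Submodule.span ℝ {v | ∃ i, η ≤ lam i ∧ v = e i},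
      ‖WithLp.toLp 2 ((A - AH) *ᵥ v)‖ ≤ ε₂ * lammax * ‖WithLp.toLp 2 v‖)
    {c δ : ℝ} (hc : 1 ≤ c) (hδ : δ = c * ε₁ * (lammax / lammin) + ε₂ * lammax / η) (hδ1 : δ < 1) :
    (∀ v : ι → ℝ,
      (1 - δ) * (v ⬝ᵥ A *ᵥ v) ≤ v ⬝ᵥ AH *ᵥ v ∧ v ⬝ᵥ AH *ᵥ v ≤ (1 + δ) * (v ⬝ᵥ A *ᵥ v)) ∧
    (∀ (ρ : ℝ) (v : ι → ℝ), v ≠ 0 → (AH⁻¹ * A) *ᵥ v = ρ • v →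
      1 / (1 + δ) ≤ ρ ∧ ρ ≤ 1 / (1 - δ)) ∧
    (∀ (ρ₁ ρ₂ : ℝ) (v₁ v₂ : ι → ℝ), v₁ ≠ 0 → v₂ ≠ 0 →
      (AH⁻¹ * A) *ᵥ v₁ = ρ₁ • v₁ → (AH⁻¹ * A) *ᵥ v₂ = ρ₂ • v₂ →
      ρ₁ / ρ₂ ≤ (1 + δ) / (1 - δ)) := by
  have lam_pos (i : ι) : 0 < lam i :=
    eigenvalue_pos_of_posDef hA (fun h ↦ by simpa [h] using hortho i i) (heig i)
  have hlammax : 0 < lammax := hmax.1.elim fun i hi ↦ hi ▸ lam_pos i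
  have hlammin : 0 < lammin := hmin.1.elim fun i hi ↦ hi ▸ lam_pos i
  have rate_le : ε₁ * lammax / lammin + ε₂ * lammax / η ≤ δ := by
    rw [hδ, mul_assoc, ← mul_div_assoc]
    gcongr
    exact le_mul_of_one_le_left (by positivity) hc
  have approx : IsSpectralApprox δ A AH :=
    isSpectralApprox_of_eigenbasis hA hAH heig hortho (by positivity) (by positivity) hlammin hη
      hmin.2 h₁ h₂ rate_le
  exact ⟨approx, fun _ _ hv hρ ↦ approx.eigenvalue_bounds hA hδ1 hv hρ,
    fun _ _ _ _ hv₁ hv₂ hρ₁ hρ₂ ↦ approx.eigenvalue_div_le hA hδ1 hv₁ hv₂ hρ₁ hρ₂⟩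

/-- Two-piece splitting by an eigenvalue threshold `η > 0`.  Let `A` be
SPD with orthonormal eigenbasis `e₁,…,e_n`, eigenvalues `λᵢ`, extreme eigenvalues
`λ_max, λ_min`, and `S₁ := span{eᵢ : λᵢ < η}`, `S₂ := span{eᵢ : λᵢ ≥ η}`.  If the
symmetric matrix `A_H` satisfies `‖(A − A_H)v‖ ≤ ε₁·λ_max·‖v‖` on `S₁` and
`‖(A − A_H)v‖ ≤ ε₂·λ_max·‖v‖` on `S₂`, and
`δ := (2/√3)·ε₁·κ(A) + ε₂·λ_max/η < 1`, then
`(1 − δ)·vᵀAv ≤ vᵀA_Hv ≤ (1 + δ)·vᵀAv` for every `v`; consequently every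
eigenvalue `ρ` of `A_H⁻¹A` satisfies `1/(1+δ) ≤ ρ ≤ 1/(1−δ)` and
`κ(A_H⁻¹A) ≤ (1+δ)/(1−δ)`. -/
theorem preconditioner_two_piece_splitting {n : ℕ}
    (A AH : Matrix (Fin n) (Fin n) ℝ)
    (hA : A.PosDef) (hAH : AH.IsSymm)
    (e : Fin n → Fin n → ℝ) (lam : Fin n → ℝ)
    (heig : ∀ i, A.mulVec (e i) = lam i • e i)
    (hortho : ∀ i j, e i ⬝ᵥ e j = if i = j then (1 : ℝ) else 0)
    (lammax lammin : ℝ)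
    (hmax : (∃ i, lam i = lammax) ∧ ∀ i, lam i ≤ lammax)
    (hmin : (∃ i, lam i = lammin) ∧ ∀ i, lammin ≤ lam i)
    (η : ℝ) (hη : 0 < η)
    (ε₁ ε₂ : ℝ) (hε₁ : 0 ≤ ε₁) (hε₂ : 0 ≤ ε₂)
    (h₁ : ∀ v ∈ Submodule.span ℝ {v : Fin n → ℝ | ∃ i, lam i < η ∧ v = e i},
        _root_.enorm ((A - AH).mulVec v) ≤ ε₁ * lammax * _root_.enorm v)
    (h₂ : ∀ v ∈ Submodule.span ℝ {v : Fin n → ℝ | ∃ i, η ≤ lam i ∧ v = e i},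
        _root_.enorm ((A - AH).mulVec v) ≤ ε₂ * lammax * _root_.enorm v)
    (δ : ℝ)
    (hδ : δ = 2 / Real.sqrt 3 * ε₁ * (lammax / lammin) + ε₂ * lammax / η)
    (hδ1 : δ < 1) :
    (∀ v : Fin n → ℝ,
        (1 - δ) * (v ⬝ᵥ A.mulVec v) ≤ v ⬝ᵥ AH.mulVec v ∧
        v ⬝ᵥ AH.mulVec v ≤ (1 + δ) * (v ⬝ᵥ A.mulVec v)) ∧
    (∀ (ρ : ℝ) (v : Fin n → ℝ), v ≠ 0 → (AH⁻¹ * A).mulVec v = ρ • v →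
        1 / (1 + δ) ≤ ρ ∧ ρ ≤ 1 / (1 - δ)) ∧
    (∀ (ρ₁ ρ₂ : ℝ) (v₁ v₂ : Fin n → ℝ), v₁ ≠ 0 → v₂ ≠ 0 →
        (AH⁻¹ * A).mulVec v₁ = ρ₁ • v₁ → (AH⁻¹ * A).mulVec v₂ = ρ₂ • v₂ →
        ρ₁ / ρ₂ ≤ (1 + δ) / (1 - δ)) := by
  simp only [enorm_eq_norm_toLp] at h₁ h₂
  exact preconditioner_two_piece_splitting_general hA hAH heig hortho hmax hmin hη hε₁ hε₂ h₁ h₂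
    one_le_two_div_sqrt_three hδ hδ1
end

section
/- Let B be a real matrix and let U₁, U₂ be real matrices with orthonormal columns (of conformal sizes); set P₁ := U₁U₁ᵀ and Q := U₂U₂ᵀ, and define B̃ᵀ := P₁Bᵀ + Q(I − P₁)Bᵀ, so that Bᵀ − B̃ᵀ = (I − Q)(I − P₁)Bᵀ. Let X_s and X_w be real matrices and write Y := [X_s, BᵀX_w] for the horizontal concatenation. Assume ‖(I − P₁)Y‖ ≤ ε₁‖Y‖ and ‖(I − Q)(I − P₁)Bᵀ‖ ≤ ε₂‖Bᵀ‖, where ε₁, ε₂ ≥ 0. Then: (i) ‖Bᵀ − B̃ᵀ‖ ≤ ε₂‖Bᵀ‖; (ii) ‖(Bᵀ − B̃ᵀ)X_w‖ ≤ min{ε₁‖Y‖, ε₂‖Bᵀ‖‖X_w‖}; and (iii) if in addition U₁ᵀU₂ = 0, then ‖(B − B̃)X_s‖ ≤ ε₁·ε₂·‖B‖·‖Y‖. -/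
open Matrix

/-- Spectral (ℓ²-operator) norm of a real matrix. -/
noncomputable def specNorm {m n : Type*} [Fintype m] [Fintype n] [DecidableEq n]
    (M : Matrix m n ℝ) : ℝ :=
  ‖LinearMap.toContinuousLinearMap (Matrix.toEuclideanLin M)‖

/-!
The residual of the two-step projection is `E = (1 - Q)(1 - P)Bᴴ`. Both blocks of `(1 - P)Y` are
dominated by `‖(1 - P)Y‖`, and `1 - Q` is a contraction, so `‖E Xw‖ ≤ ‖(1 - P)(Bᴴ Xw)‖ ≤ ε₁‖Y‖`.
If `P Q = 0`, then `P E = 0`, that is `E = (1 - P)E`, and taking adjoints `Eᴴ = Eᴴ(1 - P)`: the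
adjoint residual sees only `(1 - P)Xs`, so the two small factors `ε₂` and `ε₁` multiply in
`‖Eᴴ Xs‖ ≤ ‖E‖ ‖(1 - P)Xs‖`.
-/

section Projections

variable {m n k l R : Type*} [Fintype m]

theorem one_sub_mul_one_sub_mul_one_sub_of_mul_eq_zero [Ring R] {p q : R}
    (hp : IsIdempotentElem p) (hpq : p * q = 0) :
    (1 - p) * ((1 - q) * (1 - p)) = (1 - q) * (1 - p) := by
  have residual_orthogonal : p * ((1 - q) * (1 - p)) = 0 := by
    rw [← mul_assoc, mul_sub p 1 q, hpq, sub_zero, mul_one, hp.mul_one_sub_self]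
  rw [sub_mul 1 p, one_mul, residual_orthogonal, sub_zero]

theorem sub_two_step_projection_eq [DecidableEq m] [Ring R] (P Q : Matrix m m R)
    (C : Matrix m n R) :
    C - (P * C + Q * (1 - P) * C) = (1 - Q) * (1 - P) * C := by
  rw [Matrix.mul_assoc (1 - Q), Matrix.sub_mul 1 Q, Matrix.sub_mul 1 P, Matrix.one_mul,
    Matrix.one_mul, Matrix.mul_assoc Q, Matrix.sub_mul 1 P, Matrix.one_mul, sub_sub]

theorem isStarProjection_mul_conjTranspose_self [Fintype k] [DecidableEq k] [Semiring R]
    [StarRing R] {U : Matrix m k R} (hU : Uᴴ * U = 1) : IsStarProjection (U * Uᴴ) where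
  isIdempotentElem := by
    rw [IsIdempotentElem, Matrix.mul_assoc, ← Matrix.mul_assoc Uᴴ, hU, Matrix.one_mul]
  isSelfAdjoint := isHermitian_mul_conjTranspose_self U

theorem mul_conjTranspose_self_mul_eq_zero [Fintype k] [Fintype l] [Semiring R] [StarRing R]
    {U : Matrix m k R} {V : Matrix m l R} (hUV : Uᴴ * V = 0) : U * Uᴴ * (V * Vᴴ) = 0 := by
  rw [Matrix.mul_assoc, ← Matrix.mul_assoc Uᴴ, hUV, Matrix.zero_mul, Matrix.mul_zero]

end Projections

section L2OpNorm

open scoped Matrix.Norms.L2Operator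

variable {𝕜 m n k : Type*} [RCLike 𝕜] [Fintype m] [Fintype n] [Fintype k]
  [DecidableEq n] [DecidableEq k]

theorem specNorm_eq_l2_opNorm (M : Matrix m n ℝ) : specNorm M = ‖M‖ := rfl

theorem l2_opNorm_le_one_of_conjTranspose_mul_self_eq_one {V : Matrix m n 𝕜}
    (hV : Vᴴ * V = 1) : ‖V‖ ≤ 1 := by
  have norm_sq_le_one : ‖V‖ * ‖V‖ ≤ 1 := by
    rw [← l2_opNorm_conjTranspose_mul_self, hV]
    exact IsStarProjection.norm_le 1 (.one _)
  exact (le_abs_self _).trans (abs_le_one_iff_mul_self_le_one.mpr norm_sq_le_one)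

theorem l2_opNorm_mul_le_of_conjTranspose_mul_self_eq_one (M : Matrix m n 𝕜)
    {V : Matrix n k 𝕜} (hV : Vᴴ * V = 1) : ‖M * V‖ ≤ ‖M‖ :=
  (l2_opNorm_mul M V).trans <| mul_le_of_le_one_right (norm_nonneg M)
    (l2_opNorm_le_one_of_conjTranspose_mul_self_eq_one hV)

theorem l2_opNorm_le_l2_opNorm_fromCols_left (M : Matrix m n 𝕜) (N : Matrix m k 𝕜) :
    ‖M‖ ≤ ‖fromCols M N‖ := by
  simpa [fromCols_mul_fromRows] using
    l2_opNorm_mul_le_of_conjTranspose_mul_self_eq_one (fromCols M N)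
      (V := fromRows (1 : Matrix n n 𝕜) 0)
      (by simp [conjTranspose_fromRows_eq_fromCols_conjTranspose, fromCols_mul_fromRows])

theorem l2_opNorm_le_l2_opNorm_fromCols_right (M : Matrix m n 𝕜) (N : Matrix m k 𝕜) :
    ‖N‖ ≤ ‖fromCols M N‖ := by
  simpa [fromCols_mul_fromRows] using
    l2_opNorm_mul_le_of_conjTranspose_mul_self_eq_one (fromCols M N)
      (V := fromRows 0 (1 : Matrix k k 𝕜))
      (by simp [conjTranspose_fromRows_eq_fromCols_conjTranspose, fromCols_mul_fromRows])

theorem l2_opNorm_isStarProjection_mul_le {P : Matrix m m 𝕜} (hP : IsStarProjection P)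
    (M : Matrix m n 𝕜) : ‖P * M‖ ≤ ‖M‖ := by
  classical
  exact (l2_opNorm_mul P M).trans <| mul_le_of_le_one_left (norm_nonneg M) hP.norm_le

theorem l2_opNorm_conjTranspose_mul_le_of_mul_eq_self {P : Matrix m m 𝕜}
    (hP : P.IsHermitian) {E : Matrix m n 𝕜} (hPE : P * E = E) (X : Matrix m k 𝕜) :
    ‖Eᴴ * X‖ ≤ ‖E‖ * ‖P * X‖ := by
  classical
  have adjoint_absorbs : Eᴴ * P = Eᴴ := by
    simpa only [conjTranspose_mul, hP.eq] using congrArg conjTranspose hPE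
  calc ‖Eᴴ * X‖ = ‖Eᴴ * (P * X)‖ := by rw [← Matrix.mul_assoc, adjoint_absorbs]
    _ ≤ ‖Eᴴ‖ * ‖P * X‖ := l2_opNorm_mul _ _
    _ = ‖E‖ * ‖P * X‖ := by rw [l2_opNorm_conjTranspose]

theorem first_order_one_sided_projection_general {w s a b : Type*}
    [Fintype w] [Fintype s] [Fintype a] [Fintype b]
    [DecidableEq w] [DecidableEq s] [DecidableEq a] [DecidableEq b]
    (B : Matrix w s 𝕜) {P Q : Matrix s s 𝕜}
    (hP : IsStarProjection P) (hQ : IsStarProjection Q)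
    (Xs : Matrix s a 𝕜) (Xw : Matrix w b 𝕜) {ε₁ ε₂ : ℝ}
    {Bt : Matrix s w 𝕜} (hBt : Bt = P * Bᴴ + Q * (1 - P) * Bᴴ)
    {Y : Matrix s (a ⊕ b) 𝕜} (hY : Y = fromCols Xs (Bᴴ * Xw))
    (h₁ : ‖(1 - P) * Y‖ ≤ ε₁ * ‖Y‖)
    (h₂ : ‖(1 - Q) * (1 - P) * Bᴴ‖ ≤ ε₂ * ‖Bᴴ‖) :
    ‖Bᴴ - Bt‖ ≤ ε₂ * ‖Bᴴ‖ ∧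
    ‖(Bᴴ - Bt) * Xw‖ ≤ min (ε₁ * ‖Y‖) (ε₂ * ‖Bᴴ‖ * ‖Xw‖) ∧
    (P * Q = 0 → ‖(B - Btᴴ) * Xs‖ ≤ ε₁ * ε₂ * ‖B‖ * ‖Y‖) := by
  have residual_eq : Bᴴ - Bt = (1 - Q) * (1 - P) * Bᴴ := by
    rw [hBt, sub_two_step_projection_eq]
  have blocks_eq : (1 - P) * Y = fromCols ((1 - P) * Xs) ((1 - P) * (Bᴴ * Xw)) := by
    rw [hY, mul_fromCols]
  rw [blocks_eq] at h₁
  have Xs_bound : ‖(1 - P) * Xs‖ ≤ ε₁ * ‖Y‖ :=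
    (l2_opNorm_le_l2_opNorm_fromCols_left _ _).trans h₁
  have BXw_bound : ‖(1 - P) * (Bᴴ * Xw)‖ ≤ ε₁ * ‖Y‖ :=
    (l2_opNorm_le_l2_opNorm_fromCols_right _ _).trans h₁
  have residual_bound : ‖Bᴴ - Bt‖ ≤ ε₂ * ‖Bᴴ‖ := residual_eq ▸ h₂
  refine ⟨residual_bound, le_min ?_ ?_, fun hPQ => ?_⟩
  · calc ‖(Bᴴ - Bt) * Xw‖ = ‖(1 - Q) * ((1 - P) * (Bᴴ * Xw))‖ := by
          rw [residual_eq]; simp only [Matrix.mul_assoc]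
      _ ≤ ‖(1 - P) * (Bᴴ * Xw)‖ := l2_opNorm_isStarProjection_mul_le hQ.one_sub _
      _ ≤ ε₁ * ‖Y‖ := BXw_bound
  · exact (l2_opNorm_mul _ _).trans (by gcongr)
  · have residual_fixed : (1 - P) * (Bᴴ - Bt) = Bᴴ - Bt := by
      rw [residual_eq, ← Matrix.mul_assoc,
        one_sub_mul_one_sub_mul_one_sub_of_mul_eq_zero hP.isIdempotentElem hPQ]
    calc ‖(B - Btᴴ) * Xs‖ = ‖(Bᴴ - Bt)ᴴ * Xs‖ := by
          rw [conjTranspose_sub, conjTranspose_conjTranspose]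
      _ ≤ ‖Bᴴ - Bt‖ * ‖(1 - P) * Xs‖ :=
          l2_opNorm_conjTranspose_mul_le_of_mul_eq_self hP.one_sub.isSelfAdjoint residual_fixed Xs
      _ ≤ (ε₂ * ‖Bᴴ‖) * (ε₁ * ‖Y‖) :=
          mul_le_mul residual_bound Xs_bound (norm_nonneg _) ((norm_nonneg _).trans residual_bound)
      _ = ε₁ * ε₂ * ‖B‖ * ‖Y‖ := by rw [l2_opNorm_conjTranspose]; ring

end L2OpNorm

/-- First-order one-sided projection.  With orthonormal-column
matrices `U₁, U₂`, projections `P₁ := U₁U₁ᵀ`, `Q := U₂U₂ᵀ`, approximation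
`B̃ᵀ := P₁Bᵀ + Q(I − P₁)Bᵀ` (so `Bᵀ − B̃ᵀ = (I − Q)(I − P₁)Bᵀ`), concatenation
`Y := [X_s, BᵀX_w]`, and hypotheses `‖(I − P₁)Y‖ ≤ ε₁‖Y‖` and
`‖(I − Q)(I − P₁)Bᵀ‖ ≤ ε₂‖Bᵀ‖`, one has (i) `‖Bᵀ − B̃ᵀ‖ ≤ ε₂‖Bᵀ‖`;
(ii) `‖(Bᵀ − B̃ᵀ)X_w‖ ≤ min{ε₁‖Y‖, ε₂‖Bᵀ‖‖X_w‖}`; and (iii) if `U₁ᵀU₂ = 0`, then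
`‖(B − B̃)X_s‖ ≤ ε₁ε₂‖B‖‖Y‖`. -/
theorem first_order_one_sided_projection {w s p₁ p₂ a b : ℕ}
    (B : Matrix (Fin w) (Fin s) ℝ)
    (U₁ : Matrix (Fin s) (Fin p₁) ℝ) (U₂ : Matrix (Fin s) (Fin p₂) ℝ)
    (hU₁ : U₁ᵀ * U₁ = 1) (hU₂ : U₂ᵀ * U₂ = 1)
    (Xs : Matrix (Fin s) (Fin a) ℝ) (Xw : Matrix (Fin w) (Fin b) ℝ)
    (ε₁ ε₂ : ℝ) (hε₁ : 0 ≤ ε₁) (hε₂ : 0 ≤ ε₂)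
    (Bt : Matrix (Fin s) (Fin w) ℝ)
    (hBt : Bt = U₁ * U₁ᵀ * Bᵀ + U₂ * U₂ᵀ * (1 - U₁ * U₁ᵀ) * Bᵀ)
    (Y : Matrix (Fin s) (Fin a ⊕ Fin b) ℝ)
    (hY : Y = Matrix.fromCols Xs (Bᵀ * Xw))
    (h₁ : specNorm ((1 - U₁ * U₁ᵀ) * Y) ≤ ε₁ * specNorm Y)
    (h₂ : specNorm ((1 - U₂ * U₂ᵀ) * (1 - U₁ * U₁ᵀ) * Bᵀ) ≤ ε₂ * specNorm Bᵀ) :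
    specNorm (Bᵀ - Bt) ≤ ε₂ * specNorm Bᵀ ∧
    specNorm ((Bᵀ - Bt) * Xw) ≤ min (ε₁ * specNorm Y) (ε₂ * specNorm Bᵀ * specNorm Xw) ∧
    (U₁ᵀ * U₂ = 0 →
      specNorm ((B - Btᵀ) * Xs) ≤ ε₁ * ε₂ * specNorm B * specNorm Y) := by
  simp only [specNorm_eq_l2_opNorm, ← conjTranspose_eq_transpose_of_trivial]
    at hU₁ hU₂ hBt hY h₁ h₂ ⊢
  have ⟨hB, hXw, hXs⟩ := first_order_one_sided_projection_general B
    (isStarProjection_mul_conjTranspose_self hU₁) (isStarProjection_mul_conjTranspose_self hU₂)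
    Xs Xw hBt hY h₁ h₂
  exact ⟨hB, hXw, fun hU => hXs (mul_conjTranspose_self_mul_eq_zero hU)⟩
end
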